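/- Let n ≥ 1 and let a x : Fin n → ℝ be arbitrary. Then the family indexed by strictly decreasing tuples k : Fin n → ℕ, with term (∏_{l} (1 / (k l)!)) · D(a, k) · D(x, k), has sum equal to the determinant of the n×n matrix with (i,j) entry Real.exp (a j * x i). (Determinant form of the exponential example: Σ_λ (1/C_λ) s_λ(a) s_λ(x) = det(e^{a_j x_i}) / (V(a) V(x)), from Theorem 1 with g(x) = e^x.) -/

import Mathlib

open Matrix

/-- A finite product of absolutely convergent series is the sum over all multi-indices. -/
theorem hasSum_pi_prod {ι : Type*} (n : ℕ) (f : Fin n → ι → ℝ) (s : Fin n → ℝ)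
    (hs : ∀ i, HasSum (f i) (s i)) :
    HasSum (fun k : Fin n → ι => ∏ i, f i (k i)) (∏ i, s i) := by
  induction n with
  | zero => simp
  | succ n ih =>
    have htail := ih (fun i => f i.succ) (fun i => s i.succ) (fun i => hs i.succ)
    have hsummable := summable_mul_of_summable_norm (hs 0).summable.norm htail.summable.norm
    have hprod := (hs 0).mul htail hsummable
    rw [Fin.prod_univ_succ, ← (Fin.consEquiv fun _ : Fin (n + 1) => ι).hasSum_iff]
    refine hprod.congr_fun fun p => ?_
    simp [Fin.prod_univ_succ, Fin.consEquiv]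

/-- Every injective tuple in a linear order can be rearranged into a strictly decreasing one. -/
theorem exists_strictAnti_comp_perm {ι : Type*} [LinearOrder ι] {n : ℕ} {k : Fin n → ι}
    (hk : Function.Injective k) : ∃ σ : Equiv.Perm (Fin n), StrictAnti (k ∘ σ) := by
  refine ⟨Tuple.sort (OrderDual.toDual ∘ k), ?_⟩
  have hmono := Tuple.monotone_sort (OrderDual.toDual ∘ k)
  have hanti : Antitone (k ∘ Tuple.sort (OrderDual.toDual ∘ k)) := fun i j hij => hmono hij
  exact hanti.strictAnti_of_injective (hk.comp (Equiv.injective _))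

/-- A strictly decreasing tuple and a permutation are determined by their composite. -/
theorem injective_strictAnti_comp_perm {ι : Type*} [LinearOrder ι] {n : ℕ} :
    Function.Injective
      (fun p : {k : Fin n → ι // StrictAnti k} × Equiv.Perm (Fin n) => p.1.1 ∘ p.2) := by
  rintro ⟨⟨k, hk⟩, σ⟩ ⟨⟨l, hl⟩, τ⟩ h
  replace h : k ∘ σ = l ∘ τ := h
  have hrange : Set.range k = Set.range l := by
    rw [← σ.surjective.range_comp k, h, τ.surjective.range_comp l]
  have hkl : k = l := by
    have hdual : OrderDual.toDual ∘ k = OrderDual.toDual ∘ l := by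
      refine (StrictMono.range_inj hk.dual_right hl.dual_right).1 ?_
      rw [Set.range_comp, hrange, ← Set.range_comp]
    exact hdual
  subst hkl
  have hστ : σ = τ := Equiv.ext fun i => hk.injective (congrFun h i)
  rw [hστ]

/-- The Cauchy–Binet formula for matrices with columns indexed by a linear order, under
convergence of the series defining the entries of the product. -/
theorem hasSum_det_mul_det {ι : Type*} [LinearOrder ι] {n : ℕ} (A B : Fin n → ι → ℝ)
    (M : Matrix (Fin n) (Fin n) ℝ) (hM : ∀ i j, HasSum (fun m => A j m * B i m) (M i j)) :
    HasSum (fun k : {k : Fin n → ι // StrictAnti k} =>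
      (of fun i j => A i (k.1 j)).det * (of fun i j => B i (k.1 j)).det) M.det := by
  have hall : HasSum (fun k : Fin n → ι =>
      (∏ i, A i (k i)) * (of fun i j => B i (k j)).det) M.det := by
    rw [det_apply']
    have hσ := hasSum_sum (s := Finset.univ) fun (σ : Equiv.Perm (Fin n)) _ =>
      (hasSum_pi_prod n _ _ fun i => hM (σ i) i).mul_left ((Equiv.Perm.sign σ : ℤ) : ℝ)
    refine hσ.congr_fun fun k => ?_
    rw [det_apply', Finset.mul_sum]
    refine Finset.sum_congr rfl fun σ _ => ?_
    simp only [of_apply, Finset.prod_mul_distrib]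
    ring
  rw [← injective_strictAnti_comp_perm.hasSum_iff] at hall
  · refine (hall.prod_fiberwise fun k => hasSum_fintype _).congr_fun fun k => ?_
    rw [← det_transpose, det_apply', Finset.sum_mul]
    refine Finset.sum_congr rfl fun σ _ => ?_
    have hperm := det_permute' σ (of fun i j => B i (k.1 j))
    simp only [submatrix, of_apply, id] at hperm
    simp only [Function.comp_apply, transpose_apply, of_apply, hperm]
    ring
  · intro k hk
    have hninj : ¬ Function.Injective k := fun hinj => by
      obtain ⟨σ, hσ⟩ := exists_strictAnti_comp_perm hinj
      exact hk ⟨(⟨_, hσ⟩, σ⁻¹), by ext i; simp⟩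
    obtain ⟨i, j, hij, hne⟩ := Function.not_injective_iff.1 hninj
    rw [det_zero_of_column_eq hne (by simp [hij]), mul_zero]

theorem cauchy_type_identity_exp
    (n : ℕ) (hn : 1 ≤ n) (a x : Fin n → ℝ) :
    HasSum
      (fun k : {k : Fin n → ℕ // StrictAnti k} =>
        (∏ l : Fin n, (1 / (Nat.factorial (k.1 l) : ℝ))) *
          (Matrix.of fun i j : Fin n => (a i) ^ (k.1 j)).det *
          (Matrix.of fun i j : Fin n => (x i) ^ (k.1 j)).det)
      (Matrix.of fun i j : Fin n => Real.exp (a j * x i)).det := by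
  have hsum := hasSum_det_mul_det (fun i m => 1 / (Nat.factorial m : ℝ) * a i ^ m)
    (fun i m => x i ^ m) (of fun i j => Real.exp (a j * x i)) fun i j => by
      rw [of_apply, Real.exp_eq_exp_ℝ]
      refine (NormedSpace.expSeries_div_hasSum_exp (a j * x i)).congr_fun fun m => ?_
      rw [mul_pow]
      ring
  refine hsum.congr_fun fun k => ?_
  congr 1
  exact (det_mul_row (fun j => 1 / (Nat.factorial (k.1 j) : ℝ))
    (of fun i j => a i ^ k.1 j)).symm
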